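/- Ξ₆[δ] is independent of the choice of triad: for each even characteristic δ, with {k₁,k₂,k₃} the triad of odd characteristics assigned to δ and {k₄,k₅,k₆} the complementary indices in {1,…,6}, the complementary triad also satisfies δ = ν_{k₄}+ν_{k₅}+ν_{k₆} (mod 2), and for all τ ∈ H₂ one has Σ_{4≤i<j≤6} ⟨ν_{k_i}|ν_{k_j}⟩ · Π_{m=1,2,3} θ⁴[ν_{k_i}+ν_{k_j}+ν_{k_m}](τ) = Ξ₆[δ](τ). -/

import Mathlib

open scoped BigOperators

namespace TwoLoop

/-- 2×2 complex matrices. -/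
abbrev Mat2 := Matrix (Fin 2) (Fin 2) ℂ

/-- The genus-2 Siegel upper half space: symmetric 2×2 complex matrices with
positive definite imaginary part. -/
def SiegelH2 : Set Mat2 := {τ | τ.transpose = τ ∧ (τ.map Complex.im).PosDef}

/-- A (half-integer) theta characteristic `[a;b]`, recorded by its rows `a, b ∈ {0,1}²`. -/
abbrev Char := (Fin 2 → ℤ) × (Fin 2 → ℤ)

/-- The theta constant `θ[a;b](τ) = Σ_{n ∈ ℤ²} exp(πi (n+a/2)ᵀ τ (n+a/2) + πi (n+a/2)·b)`. -/
noncomputable def theta (κ : Char) (τ : Mat2) : ℂ :=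
  ∑' n : Fin 2 → ℤ,
    Complex.exp ((Real.pi : ℂ) * Complex.I *
      ((∑ i, ∑ j, ((n i : ℂ) + (κ.1 i : ℂ) / 2) * τ i j * ((n j : ℂ) + (κ.1 j : ℂ) / 2))
        + ∑ i, ((n i : ℂ) + (κ.1 i : ℂ) / 2) * (κ.2 i : ℂ)))

/-- The ten even characteristics δ₁,…,δ₁₀. -/
def δev : Fin 10 → Char :=
  ![(![0,0], ![0,0]), (![0,0], ![0,1]), (![0,0], ![1,0]), (![0,0], ![1,1]),
    (![0,1], ![0,0]), (![0,1], ![1,0]), (![1,0], ![0,0]), (![1,0], ![0,1]),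
    (![1,1], ![0,0]), (![1,1], ![1,1])]

/-- The six odd characteristics ν₁,…,ν₆. -/
def νodd : Fin 6 → Char :=
  ![(![0,1], ![0,1]), (![1,0], ![1,0]), (![0,1], ![1,1]),
    (![1,0], ![1,1]), (![1,1], ![0,1]), (![1,1], ![1,0])]

/-- `Θ[ε](τ) = θ[ε;0](2τ)`. -/
noncomputable def Θf (ε : Fin 2 → ℤ) (τ : Mat2) : ℂ := theta (ε, ![0,0]) ((2 : ℂ) • τ)

noncomputable def P0 (τ : Mat2) : ℂ :=
  Θf ![0,0] τ ^ 4 + Θf ![0,1] τ ^ 4 + Θf ![1,0] τ ^ 4 + Θf ![1,1] τ ^ 4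
noncomputable def P1 (τ : Mat2) : ℂ :=
  2 * (Θf ![0,0] τ ^ 2 * Θf ![0,1] τ ^ 2 + Θf ![1,0] τ ^ 2 * Θf ![1,1] τ ^ 2)
noncomputable def P2 (τ : Mat2) : ℂ :=
  2 * (Θf ![0,0] τ ^ 2 * Θf ![1,0] τ ^ 2 + Θf ![0,1] τ ^ 2 * Θf ![1,1] τ ^ 2)
noncomputable def P3 (τ : Mat2) : ℂ :=
  2 * (Θf ![0,0] τ ^ 2 * Θf ![1,1] τ ^ 2 + Θf ![0,1] τ ^ 2 * Θf ![1,0] τ ^ 2)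
noncomputable def P4 (τ : Mat2) : ℂ :=
  4 * (Θf ![0,0] τ * Θf ![0,1] τ * Θf ![1,0] τ * Θf ![1,1] τ)

/-- The vector `(P₀,…,P₄)`. -/
noncomputable def Pv : Fin 5 → Mat2 → ℂ := ![P0, P1, P2, P3, P4]

open MvPolynomial in
/-- The Igusa quartic as a polynomial in `x₀,…,x₄`. -/
noncomputable def I4poly : MvPolynomial (Fin 5) ℂ :=
  X 4 ^ 4 + X 4 ^ 2 * X 0 ^ 2 - X 4 ^ 2 * X 1 ^ 2 - X 4 ^ 2 * X 2 ^ 2 - X 4 ^ 2 * X 3 ^ 2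
    + X 1 ^ 2 * X 2 ^ 2 + X 1 ^ 2 * X 3 ^ 2 + X 2 ^ 2 * X 3 ^ 2
    - 2 * (X 0 * X 1 * X 2 * X 3)

/-- The signature `⟨κ|λ⟩ = exp(πi(a_κ·b_λ − b_κ·a_λ))`. -/
noncomputable def sig (κ lam : Char) : ℂ :=
  Complex.exp ((Real.pi : ℂ) * Complex.I *
    (((∑ i, κ.1 i * lam.2 i : ℤ) : ℂ) - ((∑ i, κ.2 i * lam.1 i : ℤ) : ℂ)))

/-- Componentwise mod-2 sum of characteristics. -/
def addChar (κ lam : Char) : Char :=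
  (fun i => (κ.1 i + lam.1 i) % 2, fun i => (κ.2 i + lam.2 i) % 2)

/-- For each even characteristic `δ_d`, the ordering `(k₁,…,k₆)` of `{1,…,6}` (0-indexed) whose
first three entries form the triad of odd characteristics with `δ_d = ν_{k₁}+ν_{k₂}+ν_{k₃}`
and whose last three are the complementary indices. -/
def triad : Fin 10 → Fin 6 → Fin 6 :=
  ![![0,3,5,1,2,4], ![0,1,5,2,3,4], ![0,1,4,2,3,5], ![0,3,4,1,2,5], ![0,1,3,2,4,5],
    ![0,4,5,1,2,3], ![0,1,2,3,4,5], ![0,2,3,1,4,5], ![0,2,5,1,3,4], ![0,2,4,1,3,5]]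

/-- D'Hoker–Phong's `Ξ₆[δ]`. -/
noncomputable def Xi6 (d : Fin 10) (τ : Mat2) : ℂ :=
  ∑ i : Fin 3, ∑ j : Fin 3,
    if i < j then
      sig (νodd (triad d (Fin.castLE (by norm_num) i))) (νodd (triad d (Fin.castLE (by norm_num) j))) *
        ∏ m : Fin 3,
          theta (addChar (addChar (νodd (triad d (Fin.castLE (by norm_num) i)))
              (νodd (triad d (Fin.castLE (by norm_num) j))))
            (νodd (triad d (⟨m.1 + 3, by omega⟩ : Fin 6)))) τ ^ 4
    else 0

/-- The formal derivative `∂I₄/∂θ⁴[δ]` of the Igusa quartic with respect to the ten fourth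
powers of the even theta constants, regarded as independent variables. -/
noncomputable def Dd (d : Fin 10) (τ : Mat2) : ℂ :=
  (1 / 48 : ℂ) *
    (theta (δev d) τ ^ 4 * (∑ d' : Fin 10, theta (δev d') τ ^ 8) - 4 * theta (δev d) τ ^ 12)

/-- `f_δ = 2Ξ₆[δ] − ∂I₄/∂θ⁴[δ]`. -/
noncomputable def fδ (d : Fin 10) (τ : Mat2) : ℂ := 2 * Xi6 d τ - Dd d τ

/-- `Ψ₆`, the weight-6 modular form. -/
noncomputable def Ψ6 (τ : Mat2) : ℂ :=
  P0 τ ^ 3 - 9 * P0 τ * (P1 τ ^ 2 + P2 τ ^ 2 + P3 τ ^ 2 - 4 * P4 τ ^ 2)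
    + 54 * (P1 τ * P2 τ * P3 τ)

/-- `Ψ₁₀`, the weight-10 modular form. -/
noncomputable def Ψ10 (τ : Mat2) : ℂ := ∏ d : Fin 10, theta (δev d) τ ^ 2

/-- A characteristic is even when `a·b` is even. -/
def IsEvenChar (κ : Char) : Prop := (∑ i, κ.1 i * κ.2 i) % 2 = 0

/-- A characteristic is odd when `a·b` is odd. -/
def IsOddChar (κ : Char) : Prop := (∑ i, κ.1 i * κ.2 i) % 2 = 1


/-- The summand of the theta series. -/
noncomputable def tm (κ : Char) (τ : Mat2) (n : Fin 2 → ℤ) : ℂ :=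
    Complex.exp ((Real.pi : ℂ) * Complex.I *
      ((∑ i, ∑ j, ((n i : ℂ) + (κ.1 i : ℂ) / 2) * τ i j * ((n j : ℂ) + (κ.1 j : ℂ) / 2))
        + ∑ i, ((n i : ℂ) + (κ.1 i : ℂ) / 2) * (κ.2 i : ℂ)))

lemma theta_eq (κ : Char) (τ : Mat2) : theta κ τ = ∑' n, tm κ τ n := rfl

lemma summable_gauss (c : ℝ) (hc : 0 < c) :
    Summable (fun n : ℤ => Real.exp (-c * (n : ℝ) ^ 2)) := by
  have h : ∀ n : ℕ, Real.exp (-c * (n : ℝ) ^ 2) ≤ Real.exp (-c) ^ n := by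
    intro n
    rw [← Real.exp_nat_mul]
    apply Real.exp_le_exp.mpr
    have : (n : ℝ) ≤ (n : ℝ) ^ 2 := by exact_mod_cast Nat.le_self_pow two_ne_zero n
    nlinarith
  have hg : Summable (fun n : ℕ => Real.exp (-c * (n : ℝ) ^ 2)) :=
    Summable.of_nonneg_of_le (fun _ => (Real.exp_pos _).le) h
      (summable_geometric_of_lt_one (Real.exp_pos _).le (Real.exp_lt_one_iff.mpr (by linarith)))
  apply Summable.of_nat_of_neg
  · simpa using hg
  · simpa using hg

lemma norm_tm (κ : Char) (τ : Mat2) (n : Fin 2 → ℤ) :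
    ‖tm κ τ n‖ = Real.exp (-Real.pi * (∑ i, ∑ j, ((n i : ℝ) + (κ.1 i : ℝ) / 2) * (τ i j).im
      * ((n j : ℝ) + (κ.1 j : ℝ) / 2))) := by
  unfold tm
  rw [Complex.norm_exp]
  congr 1
  have hx : ∀ i, ((n i : ℂ) + (κ.1 i : ℂ) / 2) = (((n i : ℝ) + (κ.1 i : ℝ) / 2 : ℝ) : ℂ) := by
    intro i; push_cast; rfl
  have hy : ∀ i, ((κ.2 i : ℂ)) = ((κ.2 i : ℝ) : ℂ) := by
    intro i; push_cast; rfl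
  simp only [hx, hy, Fin.sum_univ_two]
  simp [Complex.mul_re, Complex.mul_im]

lemma posdef_facts {τ : Mat2} (h : τ ∈ SiegelH2) :
    ∃ p q r : ℝ, (τ 0 0).im = p ∧ (τ 0 1).im = q ∧ (τ 1 0).im = q ∧ (τ 1 1).im = r ∧
      0 < p ∧ 0 < r ∧ 0 < p * r - q ^ 2 := by
  obtain ⟨hs, hp⟩ := h
  have hs' : τ 1 0 = τ 0 1 := congrFun (congrFun hs 0) 1
  refine ⟨_, _, _, rfl, rfl, by rw [hs'], rfl, ?_, ?_, ?_⟩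
  · have := hp.diag_pos (i := 0); simpa using this
  · have := hp.diag_pos (i := 1); simpa using this
  · have := hp.det_pos
    rw [Matrix.det_fin_two] at this
    simp only [Matrix.map_apply, hs'] at this
    nlinarith

lemma summable_tm {τ : Mat2} (h : τ ∈ SiegelH2) (κ : Char) :
    Summable (fun n => ‖tm κ τ n‖) := by
  obtain ⟨p, q, r, h00, h01, h10, h11, hp, hr, hd⟩ := posdef_facts h
  set c := (p * r - q ^ 2) / (p + r) with hc
  have hc0 : 0 < c := by positivity
  set t := fun i => (κ.1 i : ℝ) / 2 with ht
  have hS : Summable (fun x : ℤ × ℤ => Real.exp (-(Real.pi * c / 2) * (x.1 : ℝ) ^ 2) *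
      Real.exp (-(Real.pi * c / 2) * (x.2 : ℝ) ^ 2)) :=
    (summable_gauss _ (by positivity)).mul_of_nonneg (summable_gauss _ (by positivity))
      (fun _ => (Real.exp_pos _).le) (fun _ => (Real.exp_pos _).le)
  have hS2 := ((finTwoArrowEquiv ℤ).summable_iff.mpr hS).mul_left
    (Real.exp (Real.pi * c * (t 0 ^ 2 + t 1 ^ 2)))
  refine Summable.of_nonneg_of_le (fun _ => norm_nonneg _) (fun n => ?_) hS2
  rw [norm_tm]
  simp only [Function.comp, finTwoArrowEquiv_apply, ← Real.exp_add]
  apply Real.exp_le_exp.mpr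
  simp only [Fin.sum_univ_two, h00, h01, h10, h11]
  change -Real.pi * (((n 0 : ℝ) + t 0) * p * ((n 0 : ℝ) + t 0) +
    ((n 0 : ℝ) + t 0) * q * ((n 1 : ℝ) + t 1) + (((n 1 : ℝ) + t 1) * q * ((n 0 : ℝ) + t 0) +
    ((n 1 : ℝ) + t 1) * r * ((n 1 : ℝ) + t 1))) ≤ _
  change _ ≤ Real.pi * c * (t 0 ^ 2 + t 1 ^ 2) + (-(Real.pi * c / 2) * (n 0 : ℝ) ^ 2 +
    -(Real.pi * c / 2) * (n 1 : ℝ) ^ 2)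
  generalize t 0 = a
  generalize t 1 = b
  generalize (n 0 : ℝ) = x
  generalize (n 1 : ℝ) = y
  have h1 : c * ((x + a) ^ 2 + (y + b) ^ 2) ≤ (x + a) * p * (x + a) +
    (x + a) * q * (y + b) + ((y + b) * q * (x + a) + (y + b) * r * (y + b)) := by
    rw [hc, div_mul_eq_mul_div, div_le_iff₀ (by positivity)]
    nlinarith [sq_nonneg (p * (x + a) + q * (y + b)), sq_nonneg (q * (x + a) + r * (y + b))]
  have h2 : c * (x ^ 2 / 2 + y ^ 2 / 2 - (a ^ 2 + b ^ 2)) ≤ c * ((x + a) ^ 2 + (y + b) ^ 2) := by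
    apply mul_le_mul_of_nonneg_left _ hc0.le
    nlinarith [sq_nonneg (x + 2 * a), sq_nonneg (y + 2 * b)]
  have h3 := mul_le_mul_of_nonneg_left (h2.trans h1) Real.pi_pos.le
  linarith

lemma two_smul_mem {τ : Mat2} (h : τ ∈ SiegelH2) : (2 : ℂ) • τ ∈ SiegelH2 := by
  obtain ⟨hs, hp⟩ := h
  refine ⟨by rw [Matrix.transpose_smul, hs], ?_⟩
  have : ((2 : ℂ) • τ).map Complex.im = (2 : ℝ) • τ.map Complex.im := by
    ext i j; simp
  rw [this]
  exact hp.smul (by norm_num)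

/-- The index `ε` as an integer vector. -/
def ev (e : Fin 2 × Fin 2) : Fin 2 → ℤ := ![(e.1 : ℕ), (e.2 : ℕ)]

/-- The change of summation variables. -/
def reidx (x : (Fin 2 × Fin 2) × ((Fin 2 → ℤ) × (Fin 2 → ℤ))) : (Fin 2 → ℤ) × (Fin 2 → ℤ) :=
  (fun i => x.2.1 i + x.2.2 i + ev x.1 i, fun i => x.2.1 i - x.2.2 i)

lemma reidx_bij : Function.Bijective reidx := by
  constructor
  · rintro ⟨⟨e, f⟩, r, s⟩ ⟨⟨e', f'⟩, r', s'⟩ h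
    simp only [reidx, Prod.mk.injEq, funext_iff, Fin.forall_fin_two, ev, Matrix.cons_val_zero,
      Matrix.cons_val_one] at h
    obtain ⟨⟨h1, h2⟩, h3, h4⟩ := h
    have he : e = e' := by ext; omega
    have hf : f = f' := by ext; omega
    subst he hf
    simp only [Prod.mk.injEq, funext_iff, Fin.forall_fin_two, true_and]
    omega
  · rintro ⟨m, n⟩
    refine ⟨((⟨((m 0 - n 0) % 2).toNat, by omega⟩, ⟨((m 1 - n 1) % 2).toNat, by omega⟩),
      (fun i => n i + (m i - n i) / 2, fun i => (m i - n i) / 2)), ?_⟩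
    simp only [reidx, Prod.mk.injEq, funext_iff, Fin.forall_fin_two, ev, Matrix.cons_val_zero,
      Matrix.cons_val_one]
    omega

lemma theta_sq {τ : Mat2} (h : τ ∈ SiegelH2) (a b : Fin 2 → ℤ) :
    theta (a, b) τ ^ 2 = ∑ e : Fin 2 × Fin 2,
      (-1 : ℂ) ^ (∑ i, (ev e i + a i) * b i) * (Θf (fun i => ev e i + a i) τ * Θf (ev e) τ) := by
  have hs := summable_tm h (a, b)
  have h2 := two_smul_mem h
  rw [sq, theta_eq, tsum_mul_tsum_of_summable_norm hs hs]
  have hsum : Summable (fun z : (Fin 2 → ℤ) × (Fin 2 → ℤ) => tm (a, b) τ z.1 * tm (a, b) τ z.2) :=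
    summable_mul_of_summable_norm hs hs
  rw [← (Equiv.ofBijective reidx reidx_bij).tsum_eq]
  have hsum' := (Equiv.ofBijective reidx reidx_bij).summable_iff.mpr hsum
  refine hsum'.tsum_prod.trans ?_
  rw [tsum_fintype]
  refine Finset.sum_congr rfl fun e _ => ?_
  unfold Θf
  rw [theta_eq, theta_eq, tsum_mul_tsum_of_summable_norm (summable_tm h2 _) (summable_tm h2 _),
    ← tsum_mul_left]
  refine tsum_congr fun z => ?_
  obtain ⟨r, s⟩ := z
  simp only [Function.comp]
  have hpow : ∀ k : ℤ, (-1 : ℂ) ^ k = Complex.exp (Real.pi * Complex.I * k) := by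
    intro k
    rw [← Complex.exp_pi_mul_I, ← Complex.exp_int_mul]
    congr 1; ring
  have hper : Complex.exp (Real.pi * Complex.I * (2 * (∑ i, r i * b i : ℤ))) = 1 := by
    rw [Complex.exp_eq_one_iff]
    exact ⟨∑ i, r i * b i, by ring⟩
  rw [hpow, ← one_mul (Complex.exp _ * _), ← hper]
  simp only [tm, Equiv.ofBijective_apply, reidx, ← Complex.exp_add]
  congr 1
  simp only [Fin.sum_univ_two, Matrix.smul_apply, smul_eq_mul, Matrix.cons_val_zero,
    Matrix.cons_val_one]
  push_cast
  have hs10 : τ 1 0 = τ 0 1 := congrFun (congrFun h.1 0) 1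
  rw [hs10]
  ring

lemma Θf_shift (ε k : Fin 2 → ℤ) (τ : Mat2) : Θf (fun i => ε i + 2 * k i) τ = Θf ε τ := by
  unfold Θf
  rw [theta_eq, theta_eq, ← (Equiv.addRight k).tsum_eq (tm (ε, ![0,0]) _)]
  refine tsum_congr fun n => ?_
  simp only [tm, Equiv.coe_addRight, Pi.add_apply]
  congr 1
  simp only [Fin.sum_univ_two, Matrix.cons_val_zero, Matrix.cons_val_one]
  push_cast
  ring

lemma Θf_mod (x y : ℤ) (τ : Mat2) : Θf ![x, y] τ = Θf ![x % 2, y % 2] τ := by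
  rw [← Θf_shift ![x % 2, y % 2] ![x / 2, y / 2]]
  congr 1
  ext i
  fin_cases i <;> simp <;> omega

lemma theta_sq' {τ : Mat2} (h : τ ∈ SiegelH2) (a a' b b' : ℤ) :
    theta (![a, a'], ![b, b']) τ ^ 2 =
      (-1 : ℂ) ^ (a * b + a' * b') * (Θf ![a % 2, a' % 2] τ * Θf ![0, 0] τ) +
      (-1 : ℂ) ^ (a * b + (1 + a') * b') * (Θf ![a % 2, (1 + a') % 2] τ * Θf ![0, 1] τ) +
      ((-1 : ℂ) ^ ((1 + a) * b + a' * b') * (Θf ![(1 + a) % 2, a' % 2] τ * Θf ![1, 0] τ) +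
      (-1 : ℂ) ^ ((1 + a) * b + (1 + a') * b') *
        (Θf ![(1 + a) % 2, (1 + a') % 2] τ * Θf ![1, 1] τ)) := by
  have hv : ∀ e : Fin 2 × Fin 2, (fun i => ev e i + ![a, a'] i) =
      ![((e.1 : ℕ) : ℤ) + a, ((e.2 : ℕ) : ℤ) + a'] := by
    intro e; ext i; fin_cases i <;> simp [ev]
  rw [theta_sq h]
  simp only [hv, Fintype.sum_prod_type, Fin.sum_univ_two]
  simp only [Θf_mod (_ + _) (_ + _)]
  simp [ev]

lemma theta_four {τ : Mat2} (h : τ ∈ SiegelH2) (a a' b b' : ℤ) :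
    theta (![a, a'], ![b, b']) τ ^ 4 =
      ((-1 : ℂ) ^ (a * b + a' * b') * (Θf ![a % 2, a' % 2] τ * Θf ![0, 0] τ) +
      (-1 : ℂ) ^ (a * b + (1 + a') * b') * (Θf ![a % 2, (1 + a') % 2] τ * Θf ![0, 1] τ) +
      ((-1 : ℂ) ^ ((1 + a) * b + a' * b') * (Θf ![(1 + a) % 2, a' % 2] τ * Θf ![1, 0] τ) +
      (-1 : ℂ) ^ ((1 + a) * b + (1 + a') * b') *
        (Θf ![(1 + a) % 2, (1 + a') % 2] τ * Θf ![1, 1] τ))) ^ 2 := by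
  rw [← theta_sq' h]
  ring

lemma sig_mk (a a' b b' c c' d d' : ℤ) :
    sig (![a, a'], ![b, b']) (![c, c'], ![d, d']) =
      (-1 : ℂ) ^ ((a * d + a' * d') - (b * c + b' * c')) := by
  rw [← Complex.exp_pi_mul_I, ← Complex.exp_int_mul]
  unfold sig
  congr 1
  simp only [Fin.sum_univ_two, Matrix.cons_val_zero, Matrix.cons_val_one]
  push_cast
  ring

lemma addChar_mk (a a' b b' c c' d d' : ℤ) :
    addChar (![a, a'], ![b, b']) (![c, c'], ![d, d']) =
      (![(a + c) % 2, (a' + c') % 2], ![(b + d) % 2, (b' + d') % 2]) := by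
  unfold addChar
  ext i <;> fin_cases i <;> rfl

lemma nu0 : νodd 0 = (![0,1], ![0,1]) := rfl
lemma nu1 : νodd 1 = (![1,0], ![1,0]) := rfl
lemma nu2 : νodd 2 = (![0,1], ![1,1]) := rfl
lemma nu3 : νodd 3 = (![1,0], ![1,1]) := rfl
lemma nu4 : νodd 4 = (![1,1], ![0,1]) := rfl
lemma nu5 : νodd 5 = (![1,1], ![1,0]) := rfl

/-- One half of the claim, for arbitrary triads of indices. -/
noncomputable def half (f : Char → ℂ) (x y z u v w : Fin 6) : ℂ :=
  sig (νodd x) (νodd y) * (f (addChar (addChar (νodd x) (νodd y)) (νodd u)) *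
    f (addChar (addChar (νodd x) (νodd y)) (νodd v)) *
    f (addChar (addChar (νodd x) (νodd y)) (νodd w))) +
  sig (νodd x) (νodd z) * (f (addChar (addChar (νodd x) (νodd z)) (νodd u)) *
    f (addChar (addChar (νodd x) (νodd z)) (νodd v)) *
    f (addChar (addChar (νodd x) (νodd z)) (νodd w))) +
  sig (νodd y) (νodd z) * (f (addChar (addChar (νodd y) (νodd z)) (νodd u)) *
    f (addChar (addChar (νodd y) (νodd z)) (νodd v)) *
    f (addChar (addChar (νodd y) (νodd z)) (νodd w)))

lemma half_swap {τ : Mat2} (h : τ ∈ SiegelH2) (d : Fin 10) :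
    half (fun κ => theta κ τ ^ 4) (triad d 3) (triad d 4) (triad d 5)
      (triad d 0) (triad d 1) (triad d 2) =
    half (fun κ => theta κ τ ^ 4) (triad d 0) (triad d 1) (triad d 2)
      (triad d 3) (triad d 4) (triad d 5) := by
  fin_cases d <;>
  · simp [triad, half, nu0, nu1, nu2, nu3, nu4, nu5, addChar_mk, sig_mk, theta_four h]
    generalize Θf ![0, 0] τ = A
    generalize Θf ![0, 1] τ = B
    generalize Θf ![1, 0] τ = C
    generalize Θf ![1, 1] τ = D
    ring

/-- `Ξ₆[δ]` is independent of the choice of triad: the complementary triad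
also sums (mod 2) to `δ` and yields the same function. -/
theorem statement19 : ∀ d : Fin 10,
    addChar (addChar (νodd (triad d 3)) (νodd (triad d 4))) (νodd (triad d 5)) = δev d ∧
    ∀ τ ∈ SiegelH2,
      (∑ i : Fin 3, ∑ j : Fin 3,
        if i < j then
          sig (νodd (triad d (⟨i.1 + 3, by omega⟩ : Fin 6)))
              (νodd (triad d (⟨j.1 + 3, by omega⟩ : Fin 6))) *
            ∏ m : Fin 3,
              theta (addChar (addChar (νodd (triad d (⟨i.1 + 3, by omega⟩ : Fin 6)))
                  (νodd (triad d (⟨j.1 + 3, by omega⟩ : Fin 6))))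
                (νodd (triad d (Fin.castLE (by norm_num) m)))) τ ^ 4
        else 0) = Xi6 d τ := by
  intro d
  constructor
  · revert d
    decide
  · intro τ h
    have key := half_swap h d
    simp only [half] at key
    simp only [Xi6, Fin.sum_univ_three, Fin.prod_univ_three]
    simp only [show ¬ ((0 : Fin 3) < 0) by decide, show ((0 : Fin 3) < 1) by decide,
      show ((0 : Fin 3) < 2) by decide, show ¬ ((1 : Fin 3) < 0) by decide,
      show ¬ ((1 : Fin 3) < 1) by decide, show ((1 : Fin 3) < 2) by decide,
      show ¬ ((2 : Fin 3) < 0) by decide, show ¬ ((2 : Fin 3) < 1) by decide,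
      show ¬ ((2 : Fin 3) < 2) by decide, if_true, if_false, zero_add, add_zero]
    exact key

end TwoLoop
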